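/- arXiv:math/0608199 — 2 statements merged into one kernel-verified Lean document; each statement's English description precedes it below -/
import Mathlib

section
/- Let G be a simple graph on vertex set [n] with clique number ω and let 1 ≤ s < ω. Then the maximum of f_{s+1}(G,x) over all x ∈ ℝ^n with x ≥ 0 and f_s(G,x) = 1 equals C(ω,s+1)·C(ω,s)^{-(s+1)/s}; it is attained by the vector taking the common value t on the vertices of some ω-clique of G and 0 elsewhere, where t > 0 is chosen so that C(ω,s)·t^s = 1, i.e., t = C(ω,s)^{-1/s}. -/
open Finset

/-- `fClique G s x` is the clique polynomial `f_s(G,x) = Σ_{S an s-clique of G} Π_{i ∈ S} x_i`. -/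
def fClique {n : ℕ} (G : SimpleGraph (Fin n)) [DecidableRel G.Adj] (s : ℕ)
    (x : Fin n → ℝ) : ℝ :=
  ∑ S ∈ G.cliqueFinset s, ∏ i ∈ S, x i

lemma newton_alg (j m a b c d t : ℝ) (hj : 1 ≤ j) (hm : 1 ≤ m) (ht : 0 ≤ t)
    (h1 : a * c ≤ b ^ 2) (h2 : b * d ≤ c ^ 2) (h3 : a * d ≤ b * c) :
    ((m + 1) * b + (j - 1) * (t * a)) * ((m - 1) * d + (j + 1) * (t * c))
      ≤ (m * c + j * (t * b)) ^ 2 := by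
  have e1 : 0 ≤ (m ^ 2 - 1) * (c ^ 2 - b * d) :=
    mul_nonneg (by nlinarith) (by linarith)
  have e2 : 0 ≤ t ^ 2 * ((j ^ 2 - 1) * (b ^ 2 - a * c)) :=
    mul_nonneg (sq_nonneg t) (mul_nonneg (by nlinarith) (by linarith))
  have e3 : 0 ≤ t * ((j - 1) * (m - 1) * (b * c - a * d)) :=
    mul_nonneg ht (mul_nonneg (mul_nonneg (by linarith) (by linarith)) (by linarith))
  nlinarith [sq_nonneg (c - t * b)]

lemma esymm_zero' (m : Multiset ℝ) : m.esymm 0 = 1 := by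
  simp [Multiset.esymm, Multiset.powersetCard_zero_left]

lemma esymm_cons' (m : Multiset ℝ) (t : ℝ) (k : ℕ) :
    (t ::ₘ m).esymm (k + 1) = m.esymm (k + 1) + t * m.esymm k := by
  simp [Multiset.esymm, Multiset.powersetCard_cons, Multiset.map_map,
    Multiset.sum_map_mul_left]

lemma esymm_nonneg' (m : Multiset ℝ) (hm : ∀ t ∈ m, 0 ≤ t) (k : ℕ) : 0 ≤ m.esymm k := by
  apply Multiset.sum_nonneg
  intro y hy
  obtain ⟨w, hw, rfl⟩ := Multiset.mem_map.1 hy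
  apply Multiset.prod_nonneg
  intro a ha
  exact hm a (Multiset.mem_of_le (Multiset.mem_powersetCard.1 hw).1 ha)

lemma esymm_gt (m : Multiset ℝ) (k : ℕ) (hk : m.card < k) : m.esymm k = 0 := by
  simp [Multiset.esymm, Multiset.powersetCard_eq_empty _ hk]

lemma esymm_prop (m : Multiset ℝ) (hm : ∀ t ∈ m, 0 ≤ t) (k : ℕ) (h : m.esymm k = 0) :
    m.esymm (k + 1) = 0 := by
  induction m using Multiset.induction_on generalizing k with
  | empty => exact esymm_gt _ _ (by simp)
  | cons t m ih =>
    have hm' : ∀ t ∈ m, 0 ≤ t := fun s hs => hm s (Multiset.mem_cons_of_mem hs)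
    have ht : 0 ≤ t := hm t (Multiset.mem_cons_self t m)
    cases k with
    | zero => simp [esymm_zero'] at h
    | succ k =>
      rw [esymm_cons'] at h ⊢
      have a1 := esymm_nonneg' m hm' (k + 1)
      have a2 := mul_nonneg ht (esymm_nonneg' m hm' k)
      have h1 : m.esymm (k + 1) = 0 := by linarith
      rw [ih hm' _ h1, h1]; simp

/-- normalized elementary symmetric means -/
noncomputable def pmean (m : Multiset ℝ) (k : ℕ) : ℝ := m.esymm k / (m.card.choose k : ℝ)

lemma pmean_nonneg (m : Multiset ℝ) (hm : ∀ t ∈ m, 0 ≤ t) (k : ℕ) : 0 ≤ pmean m k :=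
  div_nonneg (esymm_nonneg' m hm k) (by positivity)

lemma pmean_zero (m : Multiset ℝ) : pmean m 0 = 1 := by simp [pmean, esymm_zero']

lemma pmean_gt (m : Multiset ℝ) (k : ℕ) (hk : m.card < k) : pmean m k = 0 := by
  simp [pmean, esymm_gt m k hk]

lemma pmean_prop (m : Multiset ℝ) (hm : ∀ t ∈ m, 0 ≤ t) (k : ℕ) (h : pmean m k = 0) :
    pmean m (k + 1) = 0 := by
  by_cases hk : m.card < k + 1
  · exact pmean_gt _ _ hk
  · have : m.esymm k = 0 := by
      rcases div_eq_zero_iff.1 h with h | h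
      · exact h
      · have := Nat.choose_pos (n := m.card) (k := k) (by omega)
        norm_cast at h; omega
    simp [pmean, esymm_prop m hm k this]

lemma pmean_cons (m : Multiset ℝ) (t : ℝ) (k : ℕ) (hk : k ≤ m.card) :
    ((m.card : ℝ) + 1) * pmean (t ::ₘ m) (k + 1)
      = ((m.card : ℝ) - k) * pmean m (k + 1) + (k + 1) * (t * pmean m k) := by
  have c1 : (0 : ℝ) < (m.card.choose k : ℝ) := by exact_mod_cast Nat.choose_pos hk
  have c2 : (0 : ℝ) < ((m.card + 1).choose (k + 1) : ℝ) := by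
    exact_mod_cast Nat.choose_pos (by omega)
  have i1 : ((m.card : ℝ) + 1) * (m.card.choose k : ℝ)
      = ((m.card + 1).choose (k + 1) : ℝ) * (k + 1) := by
    exact_mod_cast Nat.add_one_mul_choose_eq m.card k
  have i2 : ((m.card + 1).choose (k + 1) : ℝ)
      = (m.card.choose k : ℝ) + (m.card.choose (k + 1) : ℝ) := by
    exact_mod_cast Nat.choose_succ_succ m.card k
  simp only [pmean, esymm_cons', Multiset.card_cons]
  have k0 : (0 : ℝ) < (k : ℝ) + 1 := by positivity
  have j1 : ((m.card : ℝ) + 1) / ((m.card + 1).choose (k + 1) : ℝ)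
      = (k + 1) / (m.card.choose k : ℝ) := by
    rw [div_eq_div_iff c2.ne' c1.ne', i1]; ring
  have j2 : ((m.card : ℝ) + 1) / ((m.card + 1).choose (k + 1) : ℝ) * m.esymm (k + 1)
      = ((m.card : ℝ) - k) / (m.card.choose (k + 1) : ℝ) * m.esymm (k + 1) := by
    rcases hk.lt_or_eq with hlt | heq
    · have c3 : (0 : ℝ) < (m.card.choose (k + 1) : ℝ) := by
        exact_mod_cast Nat.choose_pos (by omega)
      congr 1
      rw [div_eq_div_iff c2.ne' c3.ne']
      rw [i2] at i1 ⊢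
      linarith
    · rw [esymm_gt m (k + 1) (by omega)]; simp
  calc _ = ((m.card : ℝ) + 1) / ((m.card + 1).choose (k + 1) : ℝ) * m.esymm (k + 1)
        + ((m.card : ℝ) + 1) / ((m.card + 1).choose (k + 1) : ℝ) * (t * m.esymm k) := by ring
    _ = _ := by rw [j2, j1]; ring

lemma newton_pmean (m : Multiset ℝ) (hm : ∀ t ∈ m, 0 ≤ t) (k : ℕ) :
    pmean m k * pmean m (k + 2) ≤ pmean m (k + 1) ^ 2 := by
  induction m using Multiset.induction_on generalizing k with
  | empty => rw [pmean_gt 0 (k + 2) (by simp)]; simpa using sq_nonneg _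
  | cons t m ih =>
    have hm' : ∀ t ∈ m, 0 ≤ t := fun s hs => hm s (Multiset.mem_cons_of_mem hs)
    have ht : 0 ≤ t := hm t (Multiset.mem_cons_self t m)
    by_cases hk : m.card < k + 1
    · rw [pmean_gt _ (k + 2) (by simp; omega)]; simpa using sq_nonneg _
    have hN : (0 : ℝ) < (m.card : ℝ) + 1 := by positivity
    have hkr : (k : ℝ) + 1 ≤ m.card := by exact_mod_cast not_lt.1 hk
    have r2 := pmean_cons m t (k + 1) (by omega)
    have r1 := pmean_cons m t k (by omega)
    suffices H : (((m.card : ℝ) + 1) * pmean (t ::ₘ m) k)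
        * (((m.card : ℝ) + 1) * pmean (t ::ₘ m) (k + 2))
        ≤ (((m.card : ℝ) + 1) * pmean (t ::ₘ m) (k + 1)) ^ 2 by
      have : ((m.card : ℝ) + 1) ^ 2 * (pmean (t ::ₘ m) k * pmean (t ::ₘ m) (k + 2))
        ≤ ((m.card : ℝ) + 1) ^ 2 * pmean (t ::ₘ m) (k + 1) ^ 2 := by linarith
      exact le_of_mul_le_mul_left this (by positivity)
    have h2 := ih hm' k
    cases k with
    | zero =>
      have := newton_alg 1 m.card 0 1 (pmean m 1) (pmean m 2) t le_rfl (by simpa using hkr) ht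
        (by simp) (by simpa [pmean_zero] using h2) (by simpa using pmean_nonneg m hm' 1)
      rw [r1, r2]
      simp only [pmean_zero] at this ⊢
      push_cast at this ⊢
      simp only [zero_add] at this ⊢
      linarith
    | succ k =>
      have r0 := pmean_cons m t k (by omega)
      have h1 := ih hm' k
      have h3 : pmean m k * pmean m (k + 3) ≤ pmean m (k + 1) * pmean m (k + 2) := by
        have n0 := pmean_nonneg m hm' k
        have n1 := pmean_nonneg m hm' (k + 1)
        have n2 := pmean_nonneg m hm' (k + 2)
        have n3 := pmean_nonneg m hm' (k + 3)
        rcases n2.eq_or_lt with z | z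
        · rw [pmean_prop m hm' (k + 2) z.symm]; simp [← z]
        have n1' : 0 < pmean m (k + 1) := by
          rcases n1.eq_or_lt with y | y
          · have := pmean_prop m hm' (k + 1) y.symm
            rw [this] at z; exact absurd z (lt_irrefl _)
          · exact y
        have := mul_le_mul h1 h2 (mul_nonneg n1 n3) (sq_nonneg _)
        refine le_of_mul_le_mul_left ?_ (mul_pos n1' z)
        simp only [add_assoc] at this ⊢
        norm_num at this ⊢
        linarith
      have := newton_alg (k + 2) ((m.card : ℝ) - (k + 1)) (pmean m k) (pmean m (k + 1))
        (pmean m (k + 2)) (pmean m (k + 3)) t (by linarith [(Nat.cast_nonneg k : (0:ℝ) ≤ k)])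
        (by push_cast at hkr; linarith) ht h1 h2 h3
      rw [r0, r1, r2]
      push_cast
      ring_nf at this ⊢
      linarith

lemma maclaurin_pmean (m : Multiset ℝ) (hm : ∀ t ∈ m, 0 ≤ t) (k : ℕ) :
    pmean m (k + 2) ^ (k + 1) ≤ pmean m (k + 1) ^ (k + 2) := by
  induction k with
  | zero => simpa [pmean_zero] using newton_pmean m hm 0
  | succ k ih =>
    have h := newton_pmean m hm (k + 1)
    have n1 := pmean_nonneg m hm (k + 1)
    have n2 := pmean_nonneg m hm (k + 2)
    have n3 := pmean_nonneg m hm (k + 3)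
    rcases n2.eq_or_lt with z | z
    · rw [show k + 1 + 2 = k + 2 + 1 by ring, pmean_prop m hm (k + 2) z.symm, zero_pow (by omega)]
      positivity
    have a := pow_le_pow_left₀ (mul_nonneg n1 n3) h (k + 2)
    have b := mul_le_mul_of_nonneg_right ih (pow_nonneg n3 (k + 2))
    refine le_of_mul_le_mul_left ?_ (pow_pos z (k + 1))
    calc _ ≤ _ := b
      _ = (pmean m (k + 1) * pmean m (k + 3)) ^ (k + 2) := by rw [mul_pow]
      _ ≤ _ := a
      _ = _ := by rw [← pow_mul, ← pow_add]; congr 1; ring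

lemma esymm_pad (m : Multiset ℝ) (j k : ℕ) :
    (m + Multiset.replicate j 0).esymm k = m.esymm k := by
  induction j with
  | zero => simp
  | succ j ih =>
    rw [Multiset.replicate_succ, Multiset.add_cons]
    cases k with
    | zero => simp [esymm_zero']
    | succ k => rw [esymm_cons', ih]; simp

lemma fClique_of_support {n : ℕ} (G : SimpleGraph (Fin n)) [DecidableRel G.Adj] (s : ℕ)
    (x : Fin n → ℝ) (K : Finset (Fin n)) (hK : G.IsClique K) (hx : ∀ i, i ∉ K → x i = 0) :
    fClique G s x = ∑ S ∈ K.powersetCard s, ∏ i ∈ S, x i := by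
  unfold fClique
  symm
  apply Finset.sum_subset
  · intro S hS
    rw [Finset.mem_powersetCard] at hS
    rw [SimpleGraph.mem_cliqueFinset_iff, SimpleGraph.isNClique_iff]
    exact ⟨hK.subset (by exact_mod_cast hS.1), hS.2⟩
  · intro S hS hS'
    rw [SimpleGraph.mem_cliqueFinset_iff, SimpleGraph.isNClique_iff] at hS
    rw [Finset.mem_powersetCard] at hS'
    have : ¬ S ⊆ K := fun h => hS' ⟨h, hS.2⟩
    obtain ⟨i, hi, hiK⟩ := Finset.not_subset.1 this
    exact Finset.prod_eq_zero hi (hx i hiK)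

/-- partial derivative of the clique polynomial -/
def dClique {n : ℕ} (G : SimpleGraph (Fin n)) [DecidableRel G.Adj] (s : ℕ)
    (x : Fin n → ℝ) (u : Fin n) : ℝ :=
  ∑ S ∈ (G.cliqueFinset s).filter (fun S => u ∈ S), ∏ i ∈ S.erase u, x i

lemma dClique_nonneg {n : ℕ} (G : SimpleGraph (Fin n)) [DecidableRel G.Adj] (s : ℕ)
    (x : Fin n → ℝ) (hx : ∀ i, 0 ≤ x i) (u : Fin n) : 0 ≤ dClique G s x u :=
  Finset.sum_nonneg fun _ _ => Finset.prod_nonneg fun i _ => hx i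

lemma dClique_prop {n : ℕ} (G : SimpleGraph (Fin n)) [DecidableRel G.Adj] (s : ℕ) (hs : 1 ≤ s)
    (x : Fin n → ℝ) (hx : ∀ i, 0 ≤ x i) (u : Fin n) (h : dClique G s x u = 0) :
    dClique G (s + 1) x u = 0 := by
  unfold dClique at h ⊢
  rw [Finset.sum_eq_zero_iff_of_nonneg
    (fun _ _ => Finset.prod_nonneg fun i _ => hx i)] at h
  apply Finset.sum_eq_zero
  intro S hS
  rw [Finset.mem_filter, SimpleGraph.mem_cliqueFinset_iff] at hS
  obtain ⟨hS, hu⟩ := hS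
  have hc : 1 < S.card := by rw [hS.card_eq]; omega
  obtain ⟨w, hw, hwu⟩ := Finset.exists_mem_ne hc u
  have h1 := h (S.erase w) (by
    rw [Finset.mem_filter, SimpleGraph.mem_cliqueFinset_iff]
    exact ⟨by simpa using hS.erase_of_mem hw, Finset.mem_erase.2 ⟨hwu.symm, hu⟩⟩)
  obtain ⟨i, hi, hi0⟩ := Finset.prod_eq_zero_iff.1 h1
  simp only [Finset.mem_erase] at hi
  exact Finset.prod_eq_zero (Finset.mem_erase.2 ⟨hi.1, hi.2.2⟩) hi0

lemma fClique_update {n : ℕ} (G : SimpleGraph (Fin n)) [DecidableRel G.Adj] (s : ℕ)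
    (x : Fin n → ℝ) (u v : Fin n) (huv : u ≠ v) (hadj : ¬ G.Adj u v) (a b : ℝ) :
    fClique G s (Function.update (Function.update x u a) v b)
      = (∑ S ∈ (G.cliqueFinset s).filter (fun S => u ∉ S ∧ v ∉ S), ∏ i ∈ S, x i)
        + a * dClique G s x u + b * dClique G s x v := by
  unfold dClique fClique
  rw [Finset.mul_sum, Finset.mul_sum, Finset.sum_filter, Finset.sum_filter, Finset.sum_filter,
    ← Finset.sum_add_distrib, ← Finset.sum_add_distrib]
  apply Finset.sum_congr rfl
  intro S hS
  rw [SimpleGraph.mem_cliqueFinset_iff] at hS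
  by_cases hu : u ∈ S
  · have hv : v ∉ S := fun hv => hadj (hS.isClique hu hv huv)
    simp only [hu, hv, not_true, false_and, if_false, if_true, zero_add, add_zero]
    rw [← Finset.mul_prod_erase S _ hu]
    congr 1
    · simp [huv]
    · apply Finset.prod_congr rfl
      intro i hi
      rw [Finset.mem_erase] at hi
      have : i ≠ v := by rintro rfl; exact hv hi.2
      simp [this, hi.1]
  · by_cases hv : v ∈ S
    · simp only [hu, hv, not_true, and_false, if_false, if_true, zero_add]
      rw [← Finset.mul_prod_erase S _ hv]
      congr 1
      · simp
      · apply Finset.prod_congr rfl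
        intro i hi
        rw [Finset.mem_erase] at hi
        have : i ≠ u := by rintro rfl; exact hu hi.2
        simp [this, hi.1]
    · simp only [hu, hv, not_false_iff, and_self, if_false, if_true, add_zero]
      apply Finset.prod_congr rfl
      intro i hi
      have h1 : i ≠ u := by rintro rfl; exact hu hi
      have h2 : i ≠ v := by rintro rfl; exact hv hi
      simp [h1, h2]

/-- linear exchange step -/
lemma exchange (p q p' q' xu xv : ℝ) (hp : 0 ≤ p) (hq : 0 ≤ q) (hp' : 0 ≤ p') (hq' : 0 ≤ q')
    (hxu : 0 ≤ xu) (hxv : 0 ≤ xv) (zp : p = 0 → p' = 0) (zq : q = 0 → q' = 0) :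
    ∃ a b : ℝ, 0 ≤ a ∧ 0 ≤ b ∧ (a = 0 ∨ b = 0) ∧ a * p + b * q = xu * p + xv * q ∧
      xu * p' + xv * q' ≤ a * p' + b * q' := by
  rcases hp.eq_or_lt with h | h
  · exact ⟨0, xv, le_rfl, hxv, Or.inl rfl, by simp [← h], by simp [zp h.symm]⟩
  rcases hq.eq_or_lt with k | k
  · exact ⟨xu, 0, hxu, le_rfl, Or.inr rfl, by simp [← k], by simp [zq k.symm]⟩
  rcases le_total (q' * p) (p' * q) with c | c
  · refine ⟨xu + xv * q / p, 0, by positivity, le_rfl, Or.inr rfl, by field_simp; simp, ?_⟩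
    have : q' ≤ q / p * p' := by rw [div_mul_eq_mul_div, le_div_iff₀ h]; linarith
    have := mul_le_mul_of_nonneg_left this hxv
    calc _ ≤ xu * p' + xv * (q / p * p') := by linarith
      _ = _ := by ring
  · refine ⟨0, xv + xu * p / q, le_rfl, by positivity, Or.inl rfl, by field_simp; ring, ?_⟩
    have : p' ≤ p / q * q' := by rw [div_mul_eq_mul_div, le_div_iff₀ k]; linarith
    have := mul_le_mul_of_nonneg_left this hxu
    calc _ ≤ xv * q' + xu * (p / q * q') := by linarith
      _ = _ := by ring

lemma reduce_support {n : ℕ} (G : SimpleGraph (Fin n)) [DecidableRel G.Adj] (s : ℕ) (hs : 1 ≤ s)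
    (N : ℕ) : ∀ (x : Fin n → ℝ), (∀ i, 0 ≤ x i) → (univ.filter (fun i => x i ≠ 0)).card ≤ N →
    ∃ y : Fin n → ℝ, (∀ i, 0 ≤ y i) ∧ fClique G s y = fClique G s x ∧
      fClique G (s + 1) x ≤ fClique G (s + 1) y ∧
      G.IsClique ((univ.filter (fun i => y i ≠ 0) : Finset (Fin n)) : Set (Fin n)) := by
  induction N with
  | zero =>
    intro x hx h
    refine ⟨x, hx, rfl, le_rfl, ?_⟩
    rw [Finset.card_eq_zero.1 (Nat.le_zero.1 h)]
    simp
  | succ N ih =>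
    intro x hx h
    by_cases hc : G.IsClique ((univ.filter (fun i => x i ≠ 0) : Finset (Fin n)) : Set (Fin n))
    · exact ⟨x, hx, rfl, le_rfl, hc⟩
    have : ∃ u v, x u ≠ 0 ∧ x v ≠ 0 ∧ u ≠ v ∧ ¬ G.Adj u v := by
      by_contra hcon
      push Not at hcon
      apply hc
      intro u hu v hv huv
      exact hcon u v (by simpa using hu) (by simpa using hv) huv
    obtain ⟨u, v, hu, hv, huv, hadj⟩ := this
    obtain ⟨a, b, ha, hb, hab, e1, e2⟩ := exchange (dClique G s x u) (dClique G s x v)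
      (dClique G (s + 1) x u) (dClique G (s + 1) x v) (x u) (x v)
      (dClique_nonneg _ _ _ hx _) (dClique_nonneg _ _ _ hx _)
      (dClique_nonneg _ _ _ hx _) (dClique_nonneg _ _ _ hx _) (hx u) (hx v)
      (dClique_prop G s hs x hx u) (dClique_prop G s hs x hx v)
    have hself : Function.update (Function.update x u (x u)) v (x v) = x := by simp
    have f0 := fun r => fClique_update G r x u v huv hadj (x u) (x v)
    have f1 := fun r => fClique_update G r x u v huv hadj a b
    rw [hself] at f0
    set y := Function.update (Function.update x u a) v b with hy
    have hyu : y u = a := by simp [hy, huv]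
    have hyv : y v = b := by simp [hy]
    have hyo : ∀ i, i ≠ u → i ≠ v → y i = x i := by
      intro i h1 h2; simp [hy, h1, h2]
    have hy0 : ∀ i, 0 ≤ y i := by
      intro i
      by_cases h1 : i = u
      · rw [h1, hyu]; exact ha
      by_cases h2 : i = v
      · rw [h2, hyv]; exact hb
      rw [hyo i h1 h2]; exact hx i
    have hlt : (univ.filter (fun i => y i ≠ 0)).card < (univ.filter (fun i => x i ≠ 0)).card := by
      apply Finset.card_lt_card
      rw [Finset.ssubset_iff_of_subset]
      · rcases hab with h0 | h0
        · exact ⟨u, by simpa using hu, by simp [hyu, h0]⟩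
        · exact ⟨v, by simpa using hv, by simp [hyv, h0]⟩
      · intro i hi
        simp only [Finset.mem_filter, Finset.mem_univ, true_and] at hi ⊢
        by_cases h1 : i = u
        · rw [h1]; exact hu
        by_cases h2 : i = v
        · rw [h2]; exact hv
        rwa [← hyo i h1 h2]
    obtain ⟨z, z0, z1, z2, z3⟩ := ih y hy0 (by omega)
    refine ⟨z, z0, ?_, ?_, z3⟩
    · rw [z1, f0 s, f1 s]; linarith
    · refine le_trans ?_ z2
      rw [f0 (s + 1), f1 (s + 1)]; linarith

lemma fClique_indicator {n : ℕ} (G : SimpleGraph (Fin n)) [DecidableRel G.Adj] (s : ℕ) (t : ℝ)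
    (K : Finset (Fin n)) (hK : G.IsClique K) :
    fClique G s (fun v => if v ∈ K then t else 0) = (K.card.choose s : ℝ) * t ^ s := by
  rw [fClique_of_support G s _ K hK (by intro i hi; simp [hi])]
  rw [Finset.sum_congr rfl (g := fun _ => t ^ s)]
  · simp
  · intro S hS
    rw [Finset.mem_powersetCard] at hS
    rw [Finset.prod_congr rfl (g := fun _ => t)]
    · simp [hS.2]
    · intro i hi; simp [hS.1 hi]

lemma clique_bound {n : ℕ} (G : SimpleGraph (Fin n)) [DecidableRel G.Adj] (s : ℕ) (hs : 1 ≤ s)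
    (x : Fin n → ℝ) (hx : ∀ i, 0 ≤ x i) :
    (fClique G (s + 1) x / (G.cliqueNum.choose (s + 1) : ℝ)) ^ s
      ≤ (fClique G s x / (G.cliqueNum.choose s : ℝ)) ^ (s + 1) := by
  obtain ⟨y, y0, y1, y2, y3⟩ := reduce_support G s hs _ x hx le_rfl
  rw [← y1]
  have hn : 0 ≤ fClique G (s + 1) x :=
    Finset.sum_nonneg fun _ _ => Finset.prod_nonneg fun i _ => hx i
  refine le_trans (pow_le_pow_left₀ (by positivity)
    (div_le_div_of_nonneg_right y2 (by positivity)) s) ?_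
  set K := univ.filter (fun i => y i ≠ 0) with hK
  have hc : K.card ≤ G.cliqueNum := SimpleGraph.IsClique.card_le_cliqueNum (tc := y3)
  have hf : ∀ r, fClique G r y = (K.val.map y + Multiset.replicate (G.cliqueNum - K.card) 0).esymm r := by
    intro r
    rw [fClique_of_support G r y K y3 (by intro i hi; simpa [hK] using hi), esymm_pad,
      Finset.esymm_map_val]
  obtain ⟨k, rfl⟩ := Nat.exists_eq_add_of_le' hs
  have := maclaurin_pmean (K.val.map y + Multiset.replicate (G.cliqueNum - K.card) 0) (by
    intro t ht
    rcases Multiset.mem_add.1 ht with h | h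
    · obtain ⟨i, _, rfl⟩ := Multiset.mem_map.1 h; exact y0 i
    · rw [Multiset.eq_of_mem_replicate h]) k
  unfold pmean at this
  rw [← hf, ← hf] at this
  have hcard : (K.val.map y + Multiset.replicate (G.cliqueNum - K.card) 0).card = G.cliqueNum := by
    simp; omega
  rw [hcard] at this
  exact this

/-- For `1 ≤ s < ω`, the maximum of `f_{s+1}(G,x)` subject to `x ≥ 0`, `f_s(G,x) = 1`
equals `C(ω,s+1)·C(ω,s)^{-(s+1)/s}`, attained by the vector taking the value
`C(ω,s)^{-1/s}` on the vertices of some `ω`-clique of `G` and `0` elsewhere. -/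
theorem max_fClique_succ {n : ℕ} (G : SimpleGraph (Fin n)) [DecidableRel G.Adj]
    (s : ℕ) (hs : 1 ≤ s) (hsw : s < G.cliqueNum) :
    (∀ x : Fin n → ℝ, (∀ i, 0 ≤ x i) → fClique G s x = 1 →
        fClique G (s + 1) x
          ≤ (G.cliqueNum.choose (s + 1) : ℝ)
              * (G.cliqueNum.choose s : ℝ) ^ (-(((s : ℝ) + 1) / (s : ℝ)))) ∧
    ∃ S : Finset (Fin n), G.IsNClique G.cliqueNum S ∧
      fClique G s
          (fun v => if v ∈ S then (G.cliqueNum.choose s : ℝ) ^ (-(1 : ℝ) / (s : ℝ)) else 0)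
        = 1 ∧
      fClique G (s + 1)
          (fun v => if v ∈ S then (G.cliqueNum.choose s : ℝ) ^ (-(1 : ℝ) / (s : ℝ)) else 0)
        = (G.cliqueNum.choose (s + 1) : ℝ)
            * (G.cliqueNum.choose s : ℝ) ^ (-(((s : ℝ) + 1) / (s : ℝ))) := by
  have hs0 : (0 : ℝ) < s := by exact_mod_cast hs
  have C0 : (0 : ℝ) < (G.cliqueNum.choose s : ℝ) := by exact_mod_cast Nat.choose_pos hsw.le
  have C1 : (0 : ℝ) < (G.cliqueNum.choose (s + 1) : ℝ) := by exact_mod_cast Nat.choose_pos hsw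
  have key : ∀ r : ℕ, ((G.cliqueNum.choose s : ℝ) ^ (-(1 : ℝ) / (s : ℝ))) ^ r
      = (G.cliqueNum.choose s : ℝ) ^ (-((r : ℝ) / (s : ℝ))) := by
    intro r
    rw [← Real.rpow_natCast, ← Real.rpow_mul C0.le]
    congr 1; ring
  have k1 := key (s + 1)
  push_cast at k1
  have k0 := key s
  rw [div_self hs0.ne', Real.rpow_neg_one] at k0
  refine ⟨?_, ?_⟩
  · intro x hx h1
    have hb := clique_bound G s hs x hx
    rw [h1, one_div, ← k0, ← pow_mul, mul_comm s (s + 1), pow_mul, k1] at hb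
    have := le_of_pow_le_pow_left₀ (by omega) (by positivity) hb
    rw [div_le_iff₀ C1] at this
    linarith
  · obtain ⟨S, hS⟩ := G.exists_isNClique_cliqueNum
    refine ⟨S, hS, ?_, ?_⟩
    · rw [fClique_indicator G s _ S hS.isClique, hS.card_eq, k0, mul_inv_cancel₀ C0.ne']
    · rw [fClique_indicator G (s + 1) _ S hS.isClique, hS.card_eq, k1]
end

section
/- Let G be a simple graph on vertex set [n] with clique number ω ≥ 2. Then the maximum of Σ_{{i,j} ∈ E(G)} x_i x_j over the standard simplex {x ∈ ℝ^n : x ≥ 0, x_1 + ··· + x_n = 1} equals (1 − 1/ω)/2. -/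
open Finset

/-- The quadratic form of the adjacency matrix is twice the edge sum. -/
lemma ms_edge_sum {n : ℕ} (G : SimpleGraph (Fin n)) [DecidableRel G.Adj] (x : Fin n → ℝ) :
    2 * (∑ S ∈ G.cliqueFinset 2, ∏ i ∈ S, x i)
      = ∑ i, ∑ j, if G.Adj i j then x i * x j else 0 := by
  rw [← Finset.sum_product', ← Finset.sum_filter, Finset.mul_sum]
  rw [← Finset.sum_fiberwise_of_maps_to (s := (univ ×ˢ univ).filter
    (fun p : Fin n × Fin n => G.Adj p.1 p.2)) (t := G.cliqueFinset 2)
    (g := fun p => ({p.1, p.2} : Finset (Fin n)))]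
  · apply Finset.sum_congr rfl
    intro S hS
    rw [SimpleGraph.mem_cliqueFinset_iff, SimpleGraph.isNClique_iff] at hS
    obtain ⟨hc, h2⟩ := hS
    obtain ⟨a, b, hab, rfl⟩ := Finset.card_eq_two.1 h2
    have hadj : G.Adj a b := hc (by simp) (by simp) hab
    have : ((univ ×ˢ univ).filter (fun p : Fin n × Fin n => G.Adj p.1 p.2)).filter
        (fun p => ({p.1, p.2} : Finset (Fin n)) = {a, b}) = {(a, b), (b, a)} := by
      ext ⟨c, d⟩
      simp only [mem_filter, mem_product, mem_univ, true_and, mem_insert, mem_singleton,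
        Prod.mk.injEq]
      constructor
      · rintro ⟨h1, h3⟩
        have hne := h1.ne
        have hc : c ∈ ({a, b} : Finset (Fin n)) := h3 ▸ (by simp)
        have hd : d ∈ ({a, b} : Finset (Fin n)) := h3 ▸ (by simp)
        simp only [mem_insert, mem_singleton] at hc hd
        rcases hc with rfl | rfl <;> rcases hd with rfl | rfl <;> simp_all
      · rintro (⟨rfl, rfl⟩ | ⟨rfl, rfl⟩)
        · exact ⟨hadj, rfl⟩
        · exact ⟨hadj.symm, Finset.pair_comm _ _⟩
    rw [this, Finset.sum_pair (by simp [hab]), Finset.prod_pair hab]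
    ring
  · rintro ⟨c, d⟩ h
    have h : G.Adj c d := by simpa using h
    rw [SimpleGraph.mem_cliqueFinset_iff, SimpleGraph.isNClique_iff]
    refine ⟨?_, Finset.card_pair h.ne⟩
    simp [SimpleGraph.isClique_iff, Set.pairwise_insert, h, h.symm]

lemma ms_quad {n : ℕ} (G : SimpleGraph (Fin n)) [DecidableRel G.Adj] (x : Fin n → ℝ) :
    (∑ i, ∑ j, if G.Adj i j then x i * x j else 0) = x ⬝ᵥ (G.adjMatrix ℝ).mulVec x := by
  simp only [dotProduct, Matrix.mulVec, SimpleGraph.adjMatrix_apply, Finset.mul_sum]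
  refine Finset.sum_congr rfl fun i _ => Finset.sum_congr rfl fun j _ => ?_
  split_ifs <;> simp

lemma ms_clique {n : ℕ} (G : SimpleGraph (Fin n)) [DecidableRel G.Adj] (x : Fin n → ℝ)
    (h1 : ∑ i, x i = 1) (hc : ∀ i j, x i ≠ 0 → x j ≠ 0 → i ≠ j → G.Adj i j) :
    (∑ i, ∑ j, if G.Adj i j then x i * x j else 0) = 1 - ∑ i, x i ^ 2 := by
  have : ∀ i j, (if G.Adj i j then x i * x j else 0)
      = x i * x j - if i = j then x i * x j else 0 := by
    intro i j
    by_cases hij : i = j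
    · subst hij; simp
    · by_cases ha : G.Adj i j
      · simp [hij, ha]
      · have : x i * x j = 0 := by
          by_contra h
          exact ha (hc i j (left_ne_zero_of_mul h) (right_ne_zero_of_mul h) hij)
        simp [this]
  simp only [this, Finset.sum_sub_distrib, Finset.sum_ite_eq, Finset.mem_univ, if_true,
    ← Finset.mul_sum, ← Finset.sum_mul, h1, pow_two]
  simp [h1]

lemma ms_shift {n : ℕ} (G : SimpleGraph (Fin n)) [DecidableRel G.Adj] (x : Fin n → ℝ)
    (u v : Fin n) (t : ℝ) (huv : ¬ G.Adj u v) :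
    (x + t • (Pi.single u 1 - Pi.single v 1)) ⬝ᵥ (G.adjMatrix ℝ).mulVec
      (x + t • (Pi.single u 1 - Pi.single v 1)) =
    x ⬝ᵥ (G.adjMatrix ℝ).mulVec x
      + 2 * t * ((G.adjMatrix ℝ).mulVec x u - (G.adjMatrix ℝ).mulVec x v) := by
  have hvu : ¬ G.Adj v u := fun h => huv h.symm
  have hs : ∀ w, x ⬝ᵥ (G.adjMatrix ℝ).col w = (G.adjMatrix ℝ).mulVec x w := by
    intro w
    simp [Matrix.mulVec, dotProduct, SimpleGraph.adjMatrix_apply, G.adj_comm w]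
  simp only [Matrix.mulVec_add, Matrix.mulVec_smul, Matrix.mulVec_sub, Matrix.mulVec_single_one,
    add_dotProduct, dotProduct_add, smul_dotProduct, dotProduct_smul, sub_dotProduct,
    dotProduct_sub, hs, single_dotProduct, Matrix.col_apply, SimpleGraph.adjMatrix_apply, huv, hvu,
    SimpleGraph.irrefl, if_false, smul_eq_mul]
  ring

lemma ms_upper {n : ℕ} (G : SimpleGraph (Fin n)) [DecidableRel G.Adj]
    (hw : 2 ≤ G.cliqueNum) (k : ℕ) : ∀ x : Fin n → ℝ, (univ.filter (fun i => x i ≠ 0)).card = k →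
      (∀ i, 0 ≤ x i) → ∑ i, x i = 1 →
      (∑ i, ∑ j, if G.Adj i j then x i * x j else 0) ≤ 1 - 1 / (G.cliqueNum : ℝ) := by
  induction k using Nat.strong_induction_on with
  | _ k ih =>
  intro x hk h0 h1
  by_cases hc : ∀ i j, x i ≠ 0 → x j ≠ 0 → i ≠ j → G.Adj i j
  · rw [ms_clique G x h1 hc]
    have hcl : G.IsClique (univ.filter (fun i => x i ≠ 0) : Finset (Fin n)) := by
      intro i hi j hj hij
      exact hc i j (by simpa using hi) (by simpa using hj) hij
    have hle := hcl.card_le_cliqueNum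
    have hcs := sq_sum_le_card_mul_sum_sq (s := univ.filter (fun i => x i ≠ 0)) (f := x)
    have e1 : ∑ i ∈ univ.filter (fun i => x i ≠ 0), x i = 1 := by
      rw [Finset.sum_filter_ne_zero, h1]
    have e2 : ∑ i ∈ univ.filter (fun i => x i ≠ 0), x i ^ 2 = ∑ i, x i ^ 2 := by
      rw [Finset.sum_filter]
      refine Finset.sum_congr rfl fun i _ => ?_
      split_ifs with h
      · rfl
      · simp only [not_not] at h; simp [h]
    rw [e1, e2] at hcs
    have hpos : (0 : ℝ) < G.cliqueNum := by exact_mod_cast (by omega : 0 < G.cliqueNum)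
    have hle' : ((univ.filter (fun i => x i ≠ 0)).card : ℝ) ≤ G.cliqueNum := by exact_mod_cast hle
    have hq : 0 ≤ ∑ i, x i ^ 2 := Finset.sum_nonneg fun i _ => sq_nonneg _
    have : 1 / (G.cliqueNum : ℝ) ≤ ∑ i, x i ^ 2 := by
      rw [div_le_iff₀ hpos]
      nlinarith [mul_le_mul_of_nonneg_right hle' hq]
    linarith
  · have key : ∃ u v, x u ≠ 0 ∧ x v ≠ 0 ∧ u ≠ v ∧ ¬ G.Adj u v ∧
        (G.adjMatrix ℝ).mulVec x v ≤ (G.adjMatrix ℝ).mulVec x u := by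
      push Not at hc
      obtain ⟨i, j, hi, hj, hij, ha⟩ := hc
      rcases le_total ((G.adjMatrix ℝ).mulVec x i) ((G.adjMatrix ℝ).mulVec x j) with h | h
      · exact ⟨j, i, hj, hi, hij.symm, fun h => ha h.symm, h⟩
      · exact ⟨i, j, hi, hj, hij, ha, h⟩
    obtain ⟨u, v, hu, hv, huv, ha, hd⟩ := key
    have hsh := ms_shift G x u v (x v) ha
    set y := x + x v • (Pi.single u 1 - Pi.single v 1 : Fin n → ℝ) with hy
    have yu : y u = x u + x v := by simp [hy, huv]
    have yv : y v = 0 := by simp [hy, huv.symm]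
    have yo : ∀ w, w ≠ u → w ≠ v → y w = x w := by
      intro w h h'; simp [hy, h, h']
    have hy0 : ∀ i, 0 ≤ y i := by
      intro i
      by_cases hiu : i = u
      · subst hiu; rw [yu]; exact add_nonneg (h0 _) (h0 _)
      by_cases hiv : i = v
      · subst hiv; rw [yv]
      · rw [yo i hiu hiv]; exact h0 i
    have hy1 : ∑ i, y i = 1 := by
      simp [hy, Finset.sum_add_distrib, ← Finset.mul_sum, h1]
    have hlt : (univ.filter (fun i => y i ≠ 0)).card < k := by
      rw [← hk]
      apply Finset.card_lt_card
      rw [Finset.ssubset_iff_of_subset]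
      · exact ⟨v, by simpa using hv, by simp [yv]⟩
      · intro i hi
        simp only [mem_filter, mem_univ, true_and] at hi ⊢
        by_cases hiu : i = u
        · subst hiu; exact hu
        by_cases hiv : i = v
        · subst hiv; exact hv
        · rwa [← yo i hiu hiv]
    have := ih _ hlt y rfl hy0 hy1
    rw [ms_quad] at this ⊢
    rw [hsh] at this
    nlinarith [mul_nonneg (h0 v) (sub_nonneg.2 hd)]



/-- Motzkin–Straus theorem: for a graph `G` with clique number `ω ≥ 2`, the maximum of
`Σ_{{i,j} ∈ E(G)} x_i x_j` over the standard simplex equals `(1 - 1/ω)/2`.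
The edge sum is written as the sum over `2`-cliques of the product of the coordinates. -/
theorem motzkin_straus {n : ℕ} (G : SimpleGraph (Fin n)) [DecidableRel G.Adj]
    (hw : 2 ≤ G.cliqueNum) :
    IsGreatest
      {r : ℝ | ∃ x : Fin n → ℝ, (∀ i, 0 ≤ x i) ∧ (∑ i, x i) = 1 ∧
        (∑ S ∈ G.cliqueFinset 2, ∏ i ∈ S, x i) = r}
      ((1 - 1 / (G.cliqueNum : ℝ)) / 2) := by
  constructor
  · obtain ⟨s, hs⟩ := G.exists_isNClique_cliqueNum
    have hpos : (G.cliqueNum : ℝ) ≠ 0 := by exact_mod_cast (by omega : G.cliqueNum ≠ 0)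
    have h1 : ∑ i, (if i ∈ s then 1 / (G.cliqueNum : ℝ) else 0) = 1 := by
      rw [Finset.sum_ite_mem, Finset.univ_inter, Finset.sum_const, hs.card_eq, nsmul_eq_mul]
      field_simp
    refine ⟨fun i => if i ∈ s then 1 / (G.cliqueNum : ℝ) else 0, ?_, h1, ?_⟩
    · intro i
      dsimp only
      split_ifs <;> positivity
    · have e := ms_edge_sum G (fun i => if i ∈ s then 1 / (G.cliqueNum : ℝ) else 0)
      rw [ms_clique G _ h1 (fun i j hi hj hij => hs.isClique
        (by by_contra h; exact hi (if_neg h)) (by by_contra h; exact hj (if_neg h)) hij)] at e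
      have e2 : ∑ i, (if i ∈ s then 1 / (G.cliqueNum : ℝ) else 0) ^ 2 = 1 / G.cliqueNum := by
        simp only [ite_pow, ne_eq, OfNat.ofNat_ne_zero, not_false_eq_true, zero_pow]
        rw [Finset.sum_ite_mem, Finset.univ_inter, Finset.sum_const, hs.card_eq, nsmul_eq_mul]
        field_simp
      rw [e2] at e
      linarith
  · rintro r ⟨x, h0, h1, rfl⟩
    have h := ms_upper G hw _ x rfl h0 h1
    rw [← ms_edge_sum] at h
    linarith
end
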